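/- arXiv:1811.12657 — 6 statements merged into one kernel-verified Lean document; each statement's English description precedes it below -/
import Mathlib

section
/- For the unweighted single-machine problem with time-of-use tariffs, there exists a schedule S* attaining the minimum of cost(S) = ∑_j C_j(S) + E(S) over all schedules such that S* processes jobs in Shortest Processing Time First order: for all jobs j and k, if p_j < p_k then every time slot assigned to j by S* is strictly smaller than every time slot assigned to k by S*. -/
open Finset

/-- A schedule: assigns to each unit time slot `[t,t+1)` at most one job;
each job `j` receives exactly `p j` slots, and no slot at or beyond the horizon `D` is used. -/
structure Schedule (n : ℕ) (p : Fin n → ℕ) (D : ℕ) where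
  assign : ℕ → Option (Fin n)
  card_slots : ∀ j : Fin n,
    ((Finset.range D).filter (fun t => assign t = some j)).card = p j
  beyond : ∀ t, D ≤ t → assign t = none

variable {n D : ℕ} {p : Fin n → ℕ}

/-- The set of time slots assigned to job `j`. -/
def jobSlots (S : Schedule n p D) (j : Fin n) : Finset ℕ :=
  (Finset.range D).filter (fun t => S.assign t = some j)

/-- The start time of job `j`: the least `t` with `S.assign t = some j`. -/
noncomputable def startTime (S : Schedule n p D) (j : Fin n) : ℕ :=
  sInf {t | S.assign t = some j}

/-- The completion time of job `j`: one plus the greatest `t` with `S.assign t = some j`. -/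
def completion (S : Schedule n p D) (j : Fin n) : ℕ :=
  (jobSlots S j).sup id + 1

/-- The utilization cost of a schedule: total tariff of all utilized slots. -/
def ucost (e : ℕ → ℚ) (S : Schedule n p D) : ℚ :=
  ∑ t ∈ (Finset.range D).filter (fun t => S.assign t ≠ none), e t


lemma exists_initial (U : Finset ℕ) : ∀ m, m ≤ U.card →
    ∃ A ⊆ U, A.card = m ∧ ∀ x ∈ A, ∀ y ∈ U, y ∉ A → x < y := by
  intro m
  induction m with
  | zero => intro _; exact ⟨∅, by simp, by simp, by simp⟩
  | succ m ih =>
    intro h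
    obtain ⟨A, hA, hc, hlt⟩ := ih (by omega)
    have hne : (U \ A).Nonempty := by
      rw [← card_pos, card_sdiff_of_subset hA]; omega
    have hmem := min'_mem _ hne
    set z := (U \ A).min' hne with hz
    rw [mem_sdiff] at hmem
    refine ⟨insert z A, ?_, ?_, ?_⟩
    · intro x hx
      rcases mem_insert.1 hx with rfl | hx
      · exact hmem.1
      · exact hA hx
    · rw [card_insert_of_notMem hmem.2, hc]
    · intro x hx y hy hyn
      rw [mem_insert, not_or] at hyn
      rcases mem_insert.1 hx with rfl | hx
      · exact lt_of_le_of_ne (min'_le _ _ (mem_sdiff.2 ⟨hy, hyn.2⟩)) (Ne.symm hyn.1)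
      · exact hlt x hx y hy hyn.2

lemma sup_initial_le {U A X : Finset ℕ} (hlt : ∀ x ∈ A, ∀ y ∈ U, y ∉ A → x < y)
    (hX : X ⊆ U) (hc : A.card ≤ X.card) : A.sup id ≤ X.sup id := by
  refine Finset.sup_le fun c hcA => ?_
  by_contra hcon
  have hsub : X ⊆ A.erase c := by
    intro y hy
    have hyc : y < c := lt_of_le_of_lt (Finset.le_sup (f := id) hy) (not_le.1 hcon)
    refine mem_erase.2 ⟨hyc.ne, ?_⟩
    by_contra hyA
    have := hlt c hcA y (hX hy) hyA
    omega
  have h1 := card_le_card hsub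
  have h2 := card_erase_lt_of_mem hcA
  omega

lemma sum_initial_lt {U A X : Finset ℕ} (hlt : ∀ x ∈ A, ∀ y ∈ U, y ∉ A → x < y)
    (hX : X ⊆ U) (hc : A.card = X.card) (hne : X ≠ A) : ∑ t ∈ A, t < ∑ t ∈ X, t := by
  have h1 := sum_sdiff (f := fun t : ℕ => t) (inter_subset_left : A ∩ X ⊆ A)
  have h2 := sum_sdiff (f := fun t : ℕ => t) (inter_subset_right : A ∩ X ⊆ X)
  have c1 := card_sdiff_of_subset (inter_subset_left : A ∩ X ⊆ A)
  have c2 := card_sdiff_of_subset (inter_subset_right : A ∩ X ⊆ X)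
  have hle1 : ∑ t ∈ A \ (A ∩ X), t ≤ (A \ (A ∩ X)).card • (A.sup id) :=
    sum_le_card_nsmul _ _ _ fun t ht => Finset.le_sup (f := id) (mem_sdiff.1 ht).1
  have hpos : 0 < (A \ (A ∩ X)).card := by
    rw [card_pos]
    by_contra h
    rw [not_nonempty_iff_eq_empty, sdiff_eq_empty_iff_subset] at h
    have : A ⊆ X := fun x hx => (mem_inter.1 (h hx)).2
    exact hne (eq_of_subset_of_card_le this hc.ge).symm
  have hle2 : (X \ (A ∩ X)).card • (A.sup id + 1) ≤ ∑ t ∈ X \ (A ∩ X), t := by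
    refine card_nsmul_le_sum _ _ _ fun t ht => ?_
    rw [mem_sdiff, mem_inter] at ht
    have htA : t ∉ A := fun h => ht.2 ⟨h, ht.1⟩
    obtain ⟨x0, hx0⟩ := card_pos.1 hpos
    have hA0 : A.Nonempty := ⟨x0, (mem_sdiff.1 hx0).1⟩
    obtain ⟨x, hx, hxe⟩ := exists_mem_eq_sup A hA0 id
    rw [hxe]
    exact hlt x hx t (hX ht.1) htA
  simp only [smul_eq_mul] at hle1 hle2
  have : (X \ (A ∩ X)).card = (A \ (A ∩ X)).card := by omega
  rw [this] at hle2
  rw [← h1, ← h2]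
  nlinarith

lemma schedule_nonempty (hD : ∑ j, p j ≤ D) : Nonempty (Schedule n p D) := by
  refine ⟨⟨fun t => if h : t < ∑ j, p j then some (finSigmaFinEquiv.symm ⟨t, h⟩ : (j : Fin n) × Fin (p j)).1 else none, ?_, ?_⟩⟩
  · intro j
    have : (Finset.range D).filter (fun t => (if h : t < ∑ j, p j then some (finSigmaFinEquiv.symm ⟨t, h⟩ : (j : Fin n) × Fin (p j)).1 else none) = some j)
      = (univ : Finset (Fin (p j))).image (fun i => (finSigmaFinEquiv (⟨j, i⟩ : (j : Fin n) × Fin (p j)) : ℕ)) := by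
      ext t
      simp only [mem_filter, Finset.mem_range, mem_image, mem_univ, true_and]
      constructor
      · rintro ⟨_, h⟩
        split_ifs at h with ht
        simp only [Option.some.injEq] at h
        subst h
        exact ⟨(finSigmaFinEquiv.symm ⟨t, ht⟩ : (j : Fin n) × Fin (p j)).2, by simp⟩
      · rintro ⟨i, rfl⟩
        have := (finSigmaFinEquiv (⟨j, i⟩ : (j : Fin n) × Fin (p j))).2
        refine ⟨by omega, ?_⟩
        rw [dif_pos this, Fin.eta, Equiv.symm_apply_apply]
    rw [this, card_image_of_injective]
    · simp
    · intro a b h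
      simpa using finSigmaFinEquiv.injective (Fin.ext h)
  · intro t ht
    exact dif_neg (by omega)

instance schedule_finite : Finite (Schedule n p D) := by
  refine Finite.of_injective (β := Fin D → Option (Fin n)) (fun S i => S.assign i) ?_
  rintro ⟨a, ha, ha'⟩ ⟨b, hb, hb'⟩ h
  have : a = b := by
    funext t
    by_cases ht : t < D
    · exact congrFun h ⟨t, ht⟩
    · rw [ha' t (by omega), hb' t (by omega)]
  subst this
  rfl

lemma mem_jobSlots (S : Schedule n p D) (j : Fin n) (t : ℕ) :
    t ∈ jobSlots S j ↔ S.assign t = some j := by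
  unfold jobSlots
  rw [mem_filter, Finset.mem_range]
  refine ⟨fun h => h.2, fun h => ⟨?_, h⟩⟩
  by_contra hc
  rw [S.beyond t (by omega)] at h
  cases h

def pot (S : Schedule n p D) : ℕ := ∑ j, p j * ∑ t ∈ jobSlots S j, t

lemma sum_two {M : Type*} [AddCommMonoid M] (f : Fin n → M) {j k : Fin n} (h : j ≠ k) :
    ∑ i, f i = f j + f k + ∑ i ∈ (univ.erase j).erase k, f i := by
  rw [add_assoc, add_sum_erase _ _ (mem_erase.2 ⟨h.symm, mem_univ _⟩),
    add_sum_erase _ _ (mem_univ _)]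

lemma exchange (S : Schedule n p D) (e : ℕ → ℚ) (j k : Fin n) (hjk : p j < p k) (t t' : ℕ)
    (ht : S.assign t = some j) (ht' : S.assign t' = some k) (hle : t' ≤ t) :
    ∃ S' : Schedule n p D, ucost e S' = ucost e S ∧
      ∑ i, completion S' i ≤ ∑ i, completion S i ∧ pot S < pot S' := by
  have hne : j ≠ k := by rintro rfl; omega
  have hdis : Disjoint (jobSlots S j) (jobSlots S k) := by
    rw [disjoint_left]
    intro x hx hx'
    rw [mem_jobSlots] at hx hx'
    rw [hx] at hx'
    exact hne (Option.some.inj hx')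
  have cj : (jobSlots S j).card = p j := S.card_slots j
  have ck : (jobSlots S k).card = p k := S.card_slots k
  obtain ⟨U, hU⟩ : ∃ U, U = jobSlots S j ∪ jobSlots S k := ⟨_, rfl⟩
  have cU : U.card = p j + p k := by rw [hU, card_union_of_disjoint hdis, cj, ck]
  have memU : ∀ x, x ∈ U ↔ S.assign x = some j ∨ S.assign x = some k := by
    intro x; rw [hU, mem_union, mem_jobSlots, mem_jobSlots]
  have hjU : jobSlots S j ⊆ U := hU ▸ subset_union_left
  have hkU : jobSlots S k ⊆ U := hU ▸ subset_union_right
  obtain ⟨A, hA, cA, hlt⟩ := exists_initial U (p j) (by omega)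
  have UD : ∀ x ∈ U, x < D := by
    intro x hx
    rw [hU, mem_union] at hx
    rcases hx with hx | hx <;> exact Finset.mem_range.1 (mem_filter.1 hx).1
  let a : ℕ → Option (Fin n) := fun x => if x ∈ A then some j else if x ∈ U then some k else S.assign x
  have ha : a = fun x => if x ∈ A then some j else if x ∈ U then some k else S.assign x := rfl
  have haj : (range D).filter (fun x => a x = some j) = A := by
    ext x
    have := memU x
    have := @hA x
    have := UD x
    simp only [mem_filter, Finset.mem_range, ha]
    grind
  have hak : (range D).filter (fun x => a x = some k) = U \ A := by
    ext x
    have := memU x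
    have := @hA x
    have := UD x
    simp only [mem_filter, Finset.mem_range, ha, mem_sdiff]
    grind
  have hai : ∀ i, i ≠ j → i ≠ k → (range D).filter (fun x => a x = some i) = jobSlots S i := by
    intro i hij hik
    unfold jobSlots
    ext x
    have := memU x
    have := @hA x
    have := UD x
    simp only [mem_filter, Finset.mem_range, ha]
    grind
  let S' : Schedule n p D := ⟨a, by
    intro i
    by_cases hij : i = j
    · subst hij; rw [haj, cA]
    by_cases hik : i = k
    · subst hik; rw [hak, card_sdiff_of_subset hA]; omega
    · rw [hai i hij hik]; exact S.card_slots i, by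
    intro x hx
    have h1 : x ∉ U := fun h => by have := UD x h; omega
    have h2 : x ∉ A := fun h => h1 (hA h)
    rw [ha]
    simp only [if_neg h1, if_neg h2]
    exact S.beyond x hx⟩
  have sj : jobSlots S' j = A := haj
  have sk : jobSlots S' k = U \ A := hak
  have si : ∀ i, i ≠ j → i ≠ k → jobSlots S' i = jobSlots S i := hai
  refine ⟨S', ?_, ?_, ?_⟩
  · unfold ucost
    refine sum_congr ?_ fun _ _ => rfl
    ext x
    have := memU x
    have := @hA x
    have : S'.assign x = a x := rfl
    simp only [mem_filter, this, ha]
    grind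
  · rw [sum_two _ hne, sum_two (completion S) hne]
    have h3 : ∑ i ∈ (univ.erase j).erase k, completion S' i
        = ∑ i ∈ (univ.erase j).erase k, completion S i := by
      refine sum_congr rfl fun i hi => ?_
      simp only [mem_erase] at hi
      unfold completion
      rw [si i hi.2.1 hi.1]
    rw [h3]
    unfold completion
    rw [sj, sk]
    have b1 := sup_initial_le hlt hjU (by omega)
    have b2 := sup_initial_le hlt hkU (by omega)
    have b3 : (U \ A).sup id ≤ U.sup id := sup_mono sdiff_subset
    have b4 : U.sup id = (jobSlots S j).sup id ⊔ (jobSlots S k).sup id := by rw [hU, sup_union]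
    omega
  · unfold pot
    rw [sum_two _ hne, sum_two (fun i => p i * ∑ t ∈ jobSlots S' i, t) hne]
    have h3 : ∑ i ∈ (univ.erase j).erase k, p i * ∑ t ∈ jobSlots S' i, t
        = ∑ i ∈ (univ.erase j).erase k, p i * ∑ t ∈ jobSlots S i, t := by
      refine sum_congr rfl fun i hi => ?_
      simp only [mem_erase] at hi
      rw [si i hi.2.1 hi.1]
    rw [h3]
    have hAne : jobSlots S j ≠ A := by
      intro h
      have h1 : t ∈ A := by rw [← h, mem_jobSlots]; exact ht
      have h2 : t' ∉ A := by
        rw [← h, mem_jobSlots, ht']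
        intro h; exact hne (Option.some.inj h).symm
      have := hlt t h1 t' ((memU t').2 (Or.inr ht')) h2
      omega
    have h4 := sum_initial_lt hlt hjU (by omega) hAne
    have h5 := sum_sdiff (f := fun t : ℕ => t) hA
    have h6 : ∑ t ∈ U, t = ∑ t ∈ jobSlots S j, t + ∑ t ∈ jobSlots S k, t := by
      rw [hU, sum_union hdis]
    simp only [sj, sk]
    nlinarith

/-- There is a minimum-cost schedule (for total completion time plus utilization cost)
that processes jobs in SPT order. -/
theorem spt_optimal (n : ℕ) (p : Fin n → ℕ) (hp : ∀ j, 1 ≤ p j)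
    (e : ℕ → ℚ) (he : ∀ t, 0 ≤ e t) (D : ℕ) (hD : ∑ j, p j ≤ D) :
    ∃ S' : Schedule n p D,
      (∀ S : Schedule n p D,
        (∑ j : Fin n, (completion S' j : ℚ)) + ucost e S'
          ≤ (∑ j : Fin n, (completion S j : ℚ)) + ucost e S) ∧
      (∀ j k : Fin n, p j < p k → ∀ t t',
        S'.assign t = some j → S'.assign t' = some k → t < t') := by
  haveI := schedule_nonempty hD
  obtain ⟨S0, hS0⟩ := Finite.exists_min (fun S : Schedule n p D =>
    (∑ j : Fin n, (completion S j : ℚ)) + ucost e S)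
  let T := {S : Schedule n p D // ∀ R : Schedule n p D,
    (∑ j : Fin n, (completion S j : ℚ)) + ucost e S
      ≤ (∑ j : Fin n, (completion R j : ℚ)) + ucost e R}
  haveI : Nonempty T := ⟨⟨S0, hS0⟩⟩
  haveI : Finite T := Subtype.finite
  obtain ⟨⟨S, hS⟩, hmax⟩ := Finite.exists_max (fun S : T => pot S.1)
  refine ⟨S, hS, fun j k hjk t t' ht ht' => ?_⟩
  by_contra hcon
  obtain ⟨S', h1, h2, h3⟩ := exchange S e j k hjk t t' ht ht' (not_lt.1 hcon)
  have h2' : (∑ j : Fin n, (completion S' j : ℚ)) ≤ ∑ j : Fin n, (completion S j : ℚ) := by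
    exact_mod_cast h2
  have := hmax ⟨S', fun R => by have := hS R; linarith⟩
  simp only at this
  omega
end

section
/- There exists a schedule S* attaining the minimum of cost(S) = ∑_j w_j·C_j(S) + E(S) over all schedules such that within each constant-tariff interval the utilized slots form a prefix: for every k ∈ {1,…,K} and all t, t' ∈ I_k with t' < t, if slot t is utilized by S* then slot t' is utilized by S*. -/
open Finset

variable {n D : ℕ} {p : Fin n → ℕ}

/-- The weighted total cost: `∑_j w_j C_j(S) + E(S)`. -/
def wcost (w : Fin n → ℚ) (e : ℕ → ℚ) (S : Schedule n p D) : ℚ :=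
  (∑ j : Fin n, w j * (completion S j : ℚ)) + ucost e S

/-- `S` processes jobs in the order of their indices: every slot of a smaller-indexed
job precedes every slot of a larger-indexed job. -/
def RespectsOrder (S : Schedule n p D) : Prop :=
  ∀ j k : Fin n, j < k → ∀ t t', S.assign t = some j → S.assign t' = some k → t < t'

/-- The tie-breaking value `∑_{t utilized} t`. -/
def tieVal (S : Schedule n p D) : ℕ :=
  ∑ t ∈ (Finset.range D).filter (fun t => S.assign t ≠ none), t

/-- Membership in the set `P = (⋃_k {s_k, s_k+1}) ∪ {D}` of potential split points,
for boundaries `σ : Fin (K+1) → ℕ` (0-based: interval `k` is `[σ k.castSucc, σ k.succ)`). -/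
def inP (K : ℕ) (σ : Fin (K+1) → ℕ) (D t : ℕ) : Prop :=
  (∃ k : Fin K, t = σ k.castSucc ∨ t = σ k.castSucc + 1) ∨ t = D

/-- `t` is a split point of `S`: `t ∈ P` and every job starting before `t` completes by `t`. -/
def IsSplit (K : ℕ) (σ : Fin (K+1) → ℕ) (S : Schedule n p D) (t : ℕ) : Prop :=
  inP K σ D t ∧ ∀ j : Fin n, startTime S j < t ↔ completion S j ≤ t

/-- `e_max^j`: the maximum tariff among the slots assigned to job `j`. -/
def emax (e : ℕ → ℚ) (S : Schedule n p D) (j : Fin n) : ℚ :=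
  WithBot.unbotD 0 (((jobSlots S j).image e).max)

/-- The quantity `e_max^j + ∑_{j' < j} w_{j'}` whose maximum over a region defines `Δ_x`. -/
def dval (w : Fin n → ℚ) (e : ℕ → ℚ) (S : Schedule n p D) (j : Fin n) : ℚ :=
  emax e S j + ∑ j' ∈ Finset.univ.filter (fun j' => j' < j), w j'

theorem sched_nonempty (n : ℕ) (p : Fin n → ℕ) (D : ℕ) (hD : ∑ j, p j ≤ D) :
    Nonempty (Schedule n p D) := by
  classical
  refine ⟨⟨fun t => if h : t < ∑ j, p j then some (finSigmaFinEquiv.symm ⟨t, h⟩).1 else none,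
    ?_, ?_⟩⟩
  · intro j
    have hinj : Function.Injective
        (fun i : Fin (p j) => ((finSigmaFinEquiv (⟨j, i⟩ : (j : Fin n) × Fin (p j))) : ℕ)) := by
      intro a b hab
      have := finSigmaFinEquiv.injective (Fin.ext hab)
      simpa using this
    have key : (Finset.range D).filter (fun t => (if h : t < ∑ j, p j then
        some (finSigmaFinEquiv.symm ⟨t, h⟩).1 else none) = some j)
        = Finset.univ.image (fun i : Fin (p j) =>
          ((finSigmaFinEquiv (⟨j, i⟩ : (j : Fin n) × Fin (p j))) : ℕ)) := by
      ext t
      simp only [Finset.mem_filter, Finset.mem_range, Finset.mem_image, Finset.mem_univ, true_and]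
      constructor
      · rintro ⟨_, h2⟩
        split_ifs at h2 with h
        obtain ⟨x, hx⟩ : ∃ x, x = finSigmaFinEquiv.symm (⟨t, h⟩ : Fin (∑ j, p j)) := ⟨_, rfl⟩
        rw [← hx] at h2
        obtain ⟨a, b⟩ := x
        simp only [Option.some.injEq] at h2
        subst h2
        refine ⟨b, ?_⟩
        rw [hx, Equiv.apply_symm_apply]
      · rintro ⟨i, rfl⟩
        have hlt := (finSigmaFinEquiv (⟨j, i⟩ : (j : Fin n) × Fin (p j))).isLt
        refine ⟨by omega, ?_⟩
        rw [dif_pos hlt]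
        simp only [Fin.eta, Equiv.symm_apply_apply]
    rw [key, Finset.card_image_of_injective _ hinj]
    simp
  · intro t ht
    rw [dif_neg (by omega)]

theorem sched_finite (n : ℕ) (p : Fin n → ℕ) (D : ℕ) : Finite (Schedule n p D) := by
  apply Finite.of_injective
    (fun (S : Schedule n p D) => (fun t : Fin D => S.assign t))
  intro S T h
  have : S.assign = T.assign := by
    funext t
    by_cases ht : t < D
    · exact congrFun h ⟨t, ht⟩
    · rw [S.beyond t (by omega), T.beyond t (by omega)]
  cases S; cases T; simp_all

theorem swap_lt_iff {D a b : ℕ} (ha : a < D) (hb : b < D) (t : ℕ) :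
    Equiv.swap a b t < D ↔ t < D := by
  rw [Equiv.swap_apply_def]; split_ifs <;> omega

/-- Swap the contents of two slots. -/
def swapSched {n D : ℕ} {p : Fin n → ℕ} (S : Schedule n p D) (a b : ℕ) (ha : a < D) (hb : b < D) :
    Schedule n p D where
  assign t := S.assign (Equiv.swap a b t)
  card_slots j := by
    rw [← S.card_slots j]
    apply Finset.card_equiv (Equiv.swap a b)
    intro t
    simp [swap_lt_iff ha hb]
  beyond t ht := S.beyond _ (by have := swap_lt_iff ha hb t; omega)

theorem swap_sum {n D : ℕ} {p : Fin n → ℕ} {M : Type*} [AddCommMonoid M] (S : Schedule n p D)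
    (a b : ℕ) (ha : a < D) (hb : b < D) (f : ℕ → M) :
    ∑ t ∈ (Finset.range D).filter (fun t => (swapSched S a b ha hb).assign t ≠ none), f t
    = ∑ t ∈ (Finset.range D).filter (fun t => S.assign t ≠ none), f (Equiv.swap a b t) := by
  apply Finset.sum_equiv (Equiv.swap a b)
  · intro t
    rw [Finset.mem_filter, Finset.mem_filter, Finset.mem_range, Finset.mem_range,
      swap_lt_iff ha hb]
    exact Iff.rfl
  · intro t _
    simp

/-- There is a minimum-cost schedule (weighted completion times plus utilization cost)
whose utilized slots form a prefix within every constant-tariff interval. -/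
theorem prefix_utilization_optimal (n : ℕ) (p : Fin n → ℕ) (hp : ∀ j, 1 ≤ p j)
    (w : Fin n → ℚ) (hw : ∀ j, 0 ≤ w j)
    (e : ℕ → ℚ) (he : ∀ t, 0 ≤ e t) (D : ℕ) (hD : ∑ j, p j ≤ D)
    (K : ℕ) (σ : Fin (K+1) → ℕ) (hσ0 : σ 0 = 0) (hσD : σ (Fin.last K) = D)
    (hmono : StrictMono σ) (ec : Fin K → ℚ)
    (hconst : ∀ k : Fin K, ∀ t, σ k.castSucc ≤ t → t < σ k.succ → e t = ec k) :
    ∃ S' : Schedule n p D,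
      (∀ S : Schedule n p D, wcost w e S' ≤ wcost w e S) ∧
      (∀ k : Fin K, ∀ t t' : ℕ, σ k.castSucc ≤ t' → t' < t → t < σ k.succ →
        S'.assign t ≠ none → S'.assign t' ≠ none) := by
  classical
  have := sched_nonempty n p D hD
  have := sched_finite n p D
  obtain ⟨S, hS⟩ := Finite.exists_min
    (fun S : Schedule n p D => (toLex (wcost w e S, tieVal S) : ℚ ×ₗ ℕ))
  refine ⟨S, fun T => ?_, ?_⟩
  · have h := hS T
    rw [Prod.Lex.toLex_le_toLex] at h
    rcases h with h | h
    · exact h.le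
    · exact h.1.le
  · intro k t t' h1 h2 h3 hne hn
    have hkD : σ k.succ ≤ D := hσD ▸ hmono.monotone (Fin.le_last _)
    have ht : t < D := by omega
    have ht' : t' < D := by omega
    have hee : e t = e t' := by
      rw [hconst k t (by omega) h3, hconst k t' h1 (by omega)]
    have hcomp : ∀ j, completion (swapSched S t t' ht ht') j ≤ completion S j := by
      intro j
      unfold completion
      apply Nat.succ_le_succ
      apply Finset.sup_le
      intro x hx
      have hx : x < D ∧ S.assign (Equiv.swap t t' x) = some j := by
        rw [jobSlots, Finset.mem_filter, Finset.mem_range] at hx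
        exact hx
      have hmem : Equiv.swap t t' x ∈ jobSlots S j := by
        simp only [jobSlots, Finset.mem_filter, Finset.mem_range]
        exact ⟨(swap_lt_iff ht ht' x).2 hx.1, hx.2⟩
      refine le_trans ?_ (Finset.le_sup (f := id) hmem)
      have hxt : x ≠ t := by
        rintro rfl
        rw [Equiv.swap_apply_left, hn] at hx
        simp at hx
      simp only [id]
      rw [Equiv.swap_apply_def]
      split_ifs <;> omega
    have hu : ucost e (swapSched S t t' ht ht') = ucost e S := by
      unfold ucost
      rw [swap_sum]
      apply Finset.sum_congr rfl
      intro x _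
      rw [Equiv.swap_apply_def]
      split_ifs with ha hb
      · rw [ha, hee]
      · rw [hb, hee]
      · rfl
    have hw' : wcost w e (swapSched S t t' ht ht') ≤ wcost w e S := by
      unfold wcost
      rw [hu]
      gcongr with j _
      · exact hw j
      · exact hcomp j
    have htie : tieVal (swapSched S t t' ht ht') < tieVal S := by
      unfold tieVal
      rw [swap_sum S t t' ht ht' (fun x => x)]
      apply Finset.sum_lt_sum
      · intro x hx
        have hxt : x ≠ t' := by
          rintro rfl
          simp [hn] at hx
        rw [Equiv.swap_apply_def]
        split_ifs <;> omega
      · refine ⟨t, by simp [ht, hne], ?_⟩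
        rw [Equiv.swap_apply_left]; exact h2
    have h := hS (swapSched S t t' ht ht')
    rw [Prod.Lex.toLex_le_toLex] at h
    rcases h with h | h
    · exact absurd h (not_lt.2 hw')
    · exact absurd h.2 (not_le.2 htie)
end

section
/- Let S be any schedule that respects the index order. Then for every job j, if C_j(S) ∈ P then C_j(S) is a split point of S. Consequently, if 0 = τ_1 < … < τ_ℓ = D is the list of all split points of S and R_x = [τ_x, τ_{x+1}) is a region, then no job j with start time S_j ∈ R_x has completion time C_j(S) ∈ P ∩ (τ_x, τ_{x+1}). -/
open Finset

variable {n D : ℕ} {p : Fin n → ℕ}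

theorem aux_slots {n D : ℕ} {p : Fin n → ℕ} (hp : ∀ j, 1 ≤ p j) (S : Schedule n p D)
    (j : Fin n) : S.assign (startTime S j) = some j ∧
      ∃ t, S.assign t = some j ∧ completion S j = t + 1 ∧ startTime S j ≤ t := by
  have hne : (jobSlots S j).Nonempty := by
    rw [← Finset.card_pos]
    have h := S.card_slots j
    have h2 := hp j
    unfold jobSlots
    omega
  obtain ⟨t, ht, hte⟩ := Finset.exists_mem_eq_sup (jobSlots S j) hne id
  have hta : S.assign t = some j := (Finset.mem_filter.mp ht).2
  refine ⟨Nat.sInf_mem (s := {t | S.assign t = some j}) ⟨t, hta⟩, t, hta, ?_, Nat.sInf_le hta⟩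
  unfold completion
  rw [hte]
  rfl

/-- In any index-order-respecting schedule, a completion time lying in `P` is a split
point; consequently no job starting in a region completes at a point of `P` strictly
inside that region. -/
theorem completion_in_P_is_split (n : ℕ) (p : Fin n → ℕ) (hp : ∀ j, 1 ≤ p j)
    (w : Fin n → ℚ) (hw : ∀ j, 0 ≤ w j)
    (e : ℕ → ℚ) (he : ∀ t, 0 ≤ e t) (D : ℕ) (hD : ∑ j, p j ≤ D)
    (K : ℕ) (σ : Fin (K+1) → ℕ) (hσ0 : σ 0 = 0) (hσD : σ (Fin.last K) = D)
    (hmono : StrictMono σ) (ec : Fin K → ℚ)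
    (hconst : ∀ k : Fin K, ∀ t, σ k.castSucc ≤ t → t < σ k.succ → e t = ec k)
    (S : Schedule n p D) (hord : RespectsOrder S) :
    (∀ j : Fin n, inP K σ D (completion S j) → IsSplit K σ S (completion S j)) ∧
    (∀ a b : ℕ, IsSplit K σ S a → IsSplit K σ S b → a < b →
      (∀ t, a < t → t < b → ¬ IsSplit K σ S t) →
      ∀ j : Fin n, a ≤ startTime S j → startTime S j < b →
        ¬ (inP K σ D (completion S j) ∧ a < completion S j ∧ completion S j < b)) := by
  have main : ∀ j : Fin n, inP K σ D (completion S j) → IsSplit K σ S (completion S j) := by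
    intro j hj
    refine ⟨hj, fun k => ?_⟩
    obtain ⟨hsj, tj, htj, hcj, hlej⟩ := aux_slots hp S j
    obtain ⟨hsk, tk, htk, hck, hlek⟩ := aux_slots hp S k
    rcases lt_trichotomy k j with h | h | h
    · have := hord k j h tk tj htk htj
      omega
    · subst h
      omega
    · have := hord j k h tj _ htj hsk
      omega
  refine ⟨main, ?_⟩
  rintro a b _ _ _ hno j _ _ ⟨h1, h2, h3⟩
  exact hno _ h2 h3 (main j h1)
end

section
/- Let S* be a canonical optimal schedule for the index order, let R_x = [τ_x, τ_{x+1}) be a region of S*, let J_x = {j | S_j ∈ R_x}, and let j_x be the largest-indexed job in J_x attaining Δ_x = max_{j ∈ J_x}(e_max^j + ∑_{j' < j} w_{j'}). Suppose the last interval I_k of R_x (the interval I_k intersecting R_x with τ_{x+1} ≤ s_{k+1}) is partially utilized (at least one but not all slots of I_k are utilized). Then every slot t ∈ [S_{j_x}, C_{j_x}(S*)) with e(t) ≤ e_max^{j_x} is utilized by S*. -/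
open Finset

variable {n D : ℕ} {p : Fin n → ℕ}

theorem assign_lt (S : Schedule n p D) {t : ℕ} (h : S.assign t ≠ none) : t < D := by
  by_contra hc
  exact h (S.beyond t (by omega))

theorem completion_le (S : Schedule n p D) {t : ℕ} {j : Fin n} (h : S.assign t = some j) :
    t + 1 ≤ completion S j := by
  have hD : t < D := assign_lt S (by simp [h])
  have : t ∈ jobSlots S j := by simp [jobSlots, h, hD]
  have := Finset.le_sup (f := id) this
  simp only [id] at this
  unfold completion
  omega

theorem completion_ex (hp : ∀ j, 1 ≤ p j) (S : Schedule n p D) (j : Fin n) :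
    ∃ t, S.assign t = some j ∧ completion S j = t + 1 := by
  have hne : (jobSlots S j).Nonempty := by
    rw [← Finset.card_pos]
    have := S.card_slots j
    have := hp j
    unfold jobSlots
    omega
  obtain ⟨t, ht, h2⟩ := Finset.exists_mem_eq_sup (jobSlots S j) hne id
  refine ⟨t, ?_, ?_⟩
  · simp [jobSlots] at ht
    exact ht.2
  · unfold completion
    rw [h2]; rfl

theorem start_le (S : Schedule n p D) {t : ℕ} {j : Fin n} (h : S.assign t = some j) :
    startTime S j ≤ t := Nat.sInf_le h

theorem start_mem (hp : ∀ j, 1 ≤ p j) (S : Schedule n p D) (j : Fin n) :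
    S.assign (startTime S j) = some j := by
  obtain ⟨t, ht, _⟩ := completion_ex hp S j
  exact Nat.sInf_mem (s := {t | S.assign t = some j}) ⟨t, ht⟩

theorem emax_ex (hp : ∀ j, 1 ≤ p j) (e : ℕ → ℚ) (S : Schedule n p D) (j : Fin n) :
    ∃ t, S.assign t = some j ∧ e t = emax e S j := by
  obtain ⟨t, ht, _⟩ := completion_ex hp S j
  have hm : t ∈ jobSlots S j := by
    simp [jobSlots, ht, assign_lt S (t := t) (by simp [ht])]
  obtain ⟨m, hm2⟩ := Finset.max_of_mem (Finset.mem_image_of_mem e hm)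
  have := Finset.mem_of_max hm2
  rw [Finset.mem_image] at this
  obtain ⟨x, hx, hx2⟩ := this
  refine ⟨x, ?_, ?_⟩
  · simp [jobSlots] at hx
    exact hx.2
  · unfold emax
    rw [hm2, hx2]; rfl

/-- swap the contents of two slots -/
def swapS (S : Schedule n p D) (x y : ℕ) (hx : x < D) (hy : y < D) : Schedule n p D where
  assign t := S.assign (Equiv.swap x y t)
  card_slots j := by
    rw [← S.card_slots j]
    apply Finset.card_equiv (Equiv.swap x y)
    intro i
    simp only [Finset.mem_filter, Finset.mem_range]
    have : i < D ↔ Equiv.swap x y i < D := by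
      rw [Equiv.swap_apply_def]; split_ifs <;> simp_all
    rw [this]
  beyond t ht := by
    rw [Equiv.swap_apply_of_ne_of_ne (by omega) (by omega)]
    exact S.beyond t ht

theorem swapS_assign (S : Schedule n p D) (x y : ℕ) (hx : x < D) (hy : y < D) (t : ℕ) :
    (swapS S x y hx hy).assign t =
      if t = x then S.assign y else if t = y then S.assign x else S.assign t := by
  simp only [swapS, Equiv.swap_apply_def]
  split_ifs <;> rfl

theorem swapS_order (S : Schedule n p D) (hord : RespectsOrder S) (x y : ℕ) (hx : x < D) (hy : y < D)
    (hxy : x < y) (hmid : ∀ t, x < t → t < y → S.assign t = none)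
    (hidle : S.assign x = none ∨ S.assign y = none) : RespectsOrder (swapS S x y hx hy) := by
  intro j k hjk t t' h1 h2
  rw [swapS_assign] at h1 h2
  have hA : ∀ t t', S.assign t = some j → S.assign t' = some k → t < t' := hord j k hjk
  have hm : ∀ t i, S.assign t = some i → t ≤ x ∨ y ≤ t := by
    intro t i h
    by_contra hc
    have := hmid t (by omega) (by omega)
    simp_all
  split_ifs at h1 h2
  all_goals first
    | (rcases hidle with h | h <;> simp_all <;> done)
    | (have := hA _ _ h1 h2
       have := hm _ _ h1
       have := hm _ _ h2
       rcases hidle with h | h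
       all_goals first
         | (simp_all; done)
         | omega
         | grind)

theorem shiftB (hp : ∀ j, 1 ≤ p j) : ∀ (d : ℕ) (S : Schedule n p D), RespectsOrder S →
    ∀ h u, u - h ≤ d → h < u → S.assign h = none → S.assign u ≠ none →
    ∃ S' : Schedule n p D, RespectsOrder S' ∧
      (∀ t, S'.assign t ≠ none ↔ (t ≠ u ∧ (t = h ∨ S.assign t ≠ none))) ∧
      (∀ j, completion S' j ≤ completion S j) ∧
      (∀ j, h < completion S j → completion S j ≤ u + 1 →
        completion S' j + 1 ≤ completion S j) := by
  intro d
  induction d with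
  | zero => intro S _ h u h1 h2; omega
  | succ d ih =>
    intro S hord h u hd hhu hh hu
    have huD := assign_lt S hu
    have hex : ∃ v, h < v ∧ S.assign v ≠ none := ⟨u, hhu, hu⟩
    classical
    obtain ⟨v, ⟨hv1, hv2⟩, hv3⟩ : ∃ v, (h < v ∧ S.assign v ≠ none) ∧
        ∀ t, h < t → t < v → S.assign t = none := by
      refine ⟨Nat.find hex, Nat.find_spec hex, ?_⟩
      intro t h1 h2
      have := Nat.find_min hex h2
      by_contra hc
      exact this ⟨h1, hc⟩
    have hvu : v ≤ u := by
      by_contra hc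
      exact hu (hv3 u hhu (by omega))
    have hvD : v < D := by omega
    have hhD : h < D := by omega
    have hord1 := swapS_order S hord h v hhD hvD hv1 hv3 (Or.inl hh)
    have has := swapS_assign S h v hhD hvD
    set S1 := swapS S h v hhD hvD with hS1
    have hc1 : ∀ j, completion S1 j ≤ completion S j := by
      intro j
      obtain ⟨t, ht, ht2⟩ := completion_ex hp S1 j
      rw [ht2]
      rw [has] at ht
      split_ifs at ht with h1 h2
      · have := completion_le S ht; omega
      · simp [hh] at ht
      · exact completion_le S ht
    have hc2 : ∀ j, h < completion S j → completion S j ≤ v + 1 →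
        completion S1 j + 1 ≤ completion S j := by
      intro j h1 h2
      obtain ⟨s, hs, hs2⟩ := completion_ex hp S j
      have hsv : s = v := by
        by_contra hne
        have : s ≠ h := by rintro rfl; simp [hh] at hs
        have := hv3 s (by omega) (by omega)
        simp [hs] at this
      obtain ⟨t, ht, ht2⟩ := completion_ex hp S1 j
      rw [has] at ht
      split_ifs at ht with h1 h2
      · omega
      · simp [hh] at ht
      · have := completion_le S ht
        omega
    rcases Nat.lt_or_ge v u with hlt | hge
    · obtain ⟨S', ho, hU, hC, hC'⟩ := ih S1 hord1 v u (by omega) hlt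
        (by rw [has, if_neg (by omega), if_pos rfl, hh]) (by
          rw [has, if_neg (by omega), if_neg (by omega)]; exact hu)
      refine ⟨S', ho, ?_, fun j => (hC j).trans (hc1 j), ?_⟩
      · intro t
        rw [hU, has]
        split_ifs with h1 h2 <;> simp_all <;> omega
      · intro j h1 h2
        rcases Nat.lt_or_ge (v+1) (completion S j) with h3 | h3
        · have := hC j
          have := hc1 j
          by_cases h4 : completion S1 j = completion S j
          · have := hC' j (by omega) (by omega)
            omega
          · omega
        · have := hc2 j h1 h3
          have := hC j
          omega
    · have : v = u := by omega
      subst this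
      refine ⟨S1, hord1, ?_, hc1, hc2⟩
      intro t
      rw [has]
      split_ifs with h1 h2 <;> simp_all <;> omega

theorem shiftA (hp : ∀ j, 1 ≤ p j) : ∀ (d : ℕ) (S : Schedule n p D), RespectsOrder S →
    ∀ x g, g - x ≤ d → x < g → g < D → S.assign g = none → S.assign x ≠ none →
    (∀ j, x < completion S j → completion S j < g → S.assign (completion S j) ≠ none) →
    ∃ S' : Schedule n p D, RespectsOrder S' ∧
      (∀ t, S'.assign t ≠ none ↔ (t ≠ x ∧ (t = g ∨ S.assign t ≠ none))) ∧
      (∀ j, completion S' j ≤ completion S j +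
        if x < completion S j ∧ completion S j ≤ g then 1 else 0) := by
  intro d
  induction d with
  | zero => intro S _ h u h1 h2; omega
  | succ d ih =>
    intro S hord x g hd hxg hgD hg hx hcond
    obtain ⟨v, hxv, hvg, hv2, hv3⟩ : ∃ v, x ≤ v ∧ v < g ∧ S.assign v ≠ none ∧
        ∀ t, v < t → t < g → S.assign t = none := by
      classical
      have hex : ∃ i, i < g ∧ S.assign (g - 1 - i) ≠ none :=
        ⟨g - 1 - x, by omega, by rwa [show g - 1 - (g - 1 - x) = x by omega]⟩
      have hs := Nat.find_spec hex
      have hmn := fun i (h : i < Nat.find hex) => Nat.find_min hex h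
      have hle : Nat.find hex ≤ g - 1 - x := Nat.find_min' hex
        ⟨by omega, by rwa [show g - 1 - (g - 1 - x) = x by omega]⟩
      refine ⟨g - 1 - Nat.find hex, by omega, by omega, hs.2, ?_⟩
      intro t h1 h2
      have := hmn (g - 1 - t) (by omega)
      by_contra hc
      exact this ⟨by omega, by rwa [show g - 1 - (g - 1 - t) = t by omega]⟩
    have hvD : v < D := by omega
    have hord1 := swapS_order S hord v g hvD hgD hvg hv3 (Or.inr hg)
    have has := swapS_assign S v g hvD hgD
    set S1 := swapS S v g hvD hgD with hS1
    obtain ⟨i, hi⟩ := Option.ne_none_iff_exists'.mp hv2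
    have hi1 : S1.assign g = some i := by
      rw [has, if_neg (by omega), if_pos rfl, hi]
    have hne : ∀ j, j ≠ i → completion S1 j = completion S j := by
      intro j hj
      obtain ⟨s, hs, hs2⟩ := completion_ex hp S j
      obtain ⟨t, ht, ht2⟩ := completion_ex hp S1 j
      have h1 : S1.assign s = some j := by
        rw [has]
        split_ifs with h1 h2
        · subst h1; rw [hi] at hs; exact absurd (Option.some.inj hs).symm hj
        · subst h2; simp [hg] at hs
        · exact hs
      have h2 : S.assign t = some j := by
        rw [has] at ht
        split_ifs at ht with h1 h2
        · simp [hg] at ht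
        · rw [hi] at ht; exact absurd (Option.some.inj ht).symm hj
        · exact ht
      have := completion_le S h2
      have := completion_le S1 h1
      omega
    have hci : completion S1 i ≤ completion S i +
        if completion S i ≤ g then 1 else 0 := by
      obtain ⟨s, hs, hs2⟩ := completion_ex hp S i
      obtain ⟨t, ht, ht2⟩ := completion_ex hp S1 i
      have hvs := completion_le S hi
      rw [has] at ht
      split_ifs at ht with h1 h2
      · simp [hg] at ht
      · by_cases h3 : completion S i ≤ g
        · rw [if_pos h3]
          by_cases h4 : completion S i = g
          · omega
          · exact absurd (hv3 _ (by omega) (by omega)) (hcond i (by omega) (by omega))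
        · rw [if_neg h3]; omega
      · have := completion_le S ht
        split_ifs <;> omega
    have hvi := completion_le S hi
    have hgi := completion_le S1 hi1
    rcases Nat.lt_or_ge x v with hlt | hge
    · obtain ⟨S', ho, hU, hC⟩ := ih S1 hord1 x v (by omega) hlt hvD
        (by rw [has]; simp [hg])
        (by rw [has, if_neg (by omega), if_neg (by omega)]; exact hx)
        (by
          intro j h1 h2
          have hji : j ≠ i := by rintro rfl; omega
          rw [hne j hji] at h1 h2 ⊢
          rw [has, if_neg (by omega), if_neg (by omega)]
          exact hcond j h1 (by omega))
      refine ⟨S', ho, ?_, ?_⟩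
      · intro t
        rw [hU, has]
        split_ifs with h1 h2 <;> simp_all <;> omega
      · intro j
        have := hC j
        by_cases hji : j = i
        · subst hji
          split_ifs at * <;> omega
        · rw [hne j hji] at this
          split_ifs at * <;> omega
    · have : v = x := by omega
      subst this
      refine ⟨S1, hord1, ?_, ?_⟩
      · intro t
        rw [has]
        split_ifs with h1 h2 <;> simp_all
      · intro j
        by_cases hji : j = i
        · subst hji
          split_ifs at * <;> omega
        · rw [hne j hji]
          omega

theorem sum_move {M : Type*} [AddCommMonoid M] (f : ℕ → M) (S S' : Schedule n p D) (x y : ℕ)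
    (hx : S.assign x ≠ none) (hy : S.assign y = none) (hyD : y < D)
    (hU : ∀ t, S'.assign t ≠ none ↔ (t ≠ x ∧ (t = y ∨ S.assign t ≠ none))) :
    (∑ t ∈ (Finset.range D).filter (fun t => S'.assign t ≠ none), f t) + f x =
    (∑ t ∈ (Finset.range D).filter (fun t => S.assign t ≠ none), f t) + f y := by
  have hxD := assign_lt S hx
  have hxy : x ≠ y := by rintro rfl; exact hx hy
  have e1 : (Finset.range D).filter (fun t => S'.assign t ≠ none) =
      insert y (((Finset.range D).filter (fun t => S.assign t ≠ none)).erase x) := by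
    ext t
    simp only [Finset.mem_filter, Finset.mem_range, hU, Finset.mem_insert, Finset.mem_erase]
    constructor
    · tauto
    · rintro (rfl | h)
      · exact ⟨hyD, hxy.symm, Or.inl rfl⟩
      · tauto
  rw [e1, Finset.sum_insert (by simp [hy]), add_assoc, Finset.sum_erase_add _ _ (by simp [hx, hxD]),
    add_comm]

theorem ineqA (hp : ∀ j, 1 ≤ p j) (w : Fin n → ℚ) (hw : ∀ j, 0 ≤ w j) (e : ℕ → ℚ)
    (S : Schedule n p D) (hord : RespectsOrder S)
    (hopt : ∀ S' : Schedule n p D, RespectsOrder S' → wcost w e S ≤ wcost w e S')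
    (x g : ℕ) (hxg : x < g) (hgD : g < D) (hg : S.assign g = none) (hx : S.assign x ≠ none)
    (hcond : ∀ j, x < completion S j → completion S j < g → S.assign (completion S j) ≠ none) :
    e x ≤ e g + ∑ j with x < completion S j ∧ completion S j ≤ g, w j := by
  obtain ⟨S', ho, hU, hC⟩ := shiftA hp _ S hord x g le_rfl hxg hgD hg hx hcond
  have h1 := hopt S' ho
  have h2 := sum_move e S S' x g hx hg hgD hU
  have h3 : ∑ j, w j * (completion S' j : ℚ) ≤ ∑ j, w j * (completion S j : ℚ) +
      ∑ j with x < completion S j ∧ completion S j ≤ g, w j := by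
    rw [Finset.sum_filter, ← Finset.sum_add_distrib]
    apply Finset.sum_le_sum
    intro j _
    have := hC j
    have h4 : (completion S' j : ℚ) ≤ completion S j +
        if x < completion S j ∧ completion S j ≤ g then 1 else 0 := by exact_mod_cast this
    have := mul_le_mul_of_nonneg_left h4 (hw j)
    rw [mul_add] at this
    simpa using this
  unfold wcost ucost at h1
  linarith

theorem ineqB (hp : ∀ j, 1 ≤ p j) (w : Fin n → ℚ) (hw : ∀ j, 0 ≤ w j) (e : ℕ → ℚ)
    (S : Schedule n p D) (hord : RespectsOrder S)
    (hopt : ∀ S' : Schedule n p D, RespectsOrder S' → wcost w e S ≤ wcost w e S')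
    (htie : ∀ S' : Schedule n p D, RespectsOrder S' → wcost w e S' = wcost w e S →
      tieVal S ≤ tieVal S')
    (h u : ℕ) (hhu : h < u) (hh : S.assign h = none) (hu : S.assign u ≠ none) :
    e u + ∑ j with h < completion S j ∧ completion S j ≤ u + 1, w j < e h := by
  obtain ⟨S', ho, hU, hC, hC'⟩ := shiftB hp _ S hord h u le_rfl hhu hh hu
  have hhD : h < D := hhu.trans (assign_lt S hu)
  have h1 := hopt S' ho
  have h2 := sum_move e S S' u h hu hh hhD hU
  have h5 := sum_move (fun t => t) S S' u h hu hh hhD hU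
  have h3 : ∑ j, w j * (completion S' j : ℚ) +
      ∑ j with h < completion S j ∧ completion S j ≤ u + 1, w j ≤
      ∑ j, w j * (completion S j : ℚ) := by
    rw [Finset.sum_filter, ← Finset.sum_add_distrib]
    apply Finset.sum_le_sum
    intro j _
    split_ifs with hj
    · have h4 : (completion S' j : ℚ) + 1 ≤ completion S j := by exact_mod_cast hC' j hj.1 hj.2
      have := mul_le_mul_of_nonneg_left h4 (hw j)
      linarith
    · have h4 : (completion S' j : ℚ) ≤ completion S j := by exact_mod_cast hC j
      have := mul_le_mul_of_nonneg_left h4 (hw j)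
      linarith
  by_contra hc
  push Not at hc
  have h6 : wcost w e S' = wcost w e S := by
    apply le_antisymm _ h1
    unfold wcost ucost
    linarith
  have := htie S' ho h6
  unfold tieVal at this
  omega

theorem exists_interval (K : ℕ) (σ : Fin (K+1) → ℕ) (hσ0 : σ 0 = 0) (t : ℕ)
    (ht : t < σ (Fin.last K)) : ∃ m : Fin K, σ m.castSucc ≤ t ∧ t < σ m.succ := by
  by_contra hc
  push Not at hc
  have : ∀ i : Fin (K+1), σ i ≤ t := by
    intro i
    induction i using Fin.induction with
    | zero => omega
    | succ i ih => exact hc i ih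
  have := this (Fin.last K)
  omega

theorem cheap_slots_utilized (n : ℕ) (p : Fin n → ℕ) (hp : ∀ j, 1 ≤ p j)
    (w : Fin n → ℚ) (hw : ∀ j, 0 ≤ w j)
    (e : ℕ → ℚ) (he : ∀ t, 0 ≤ e t) (D : ℕ) (hD : ∑ j, p j ≤ D)
    (K : ℕ) (σ : Fin (K+1) → ℕ) (hσ0 : σ 0 = 0) (hσD : σ (Fin.last K) = D)
    (hmono : StrictMono σ) (ec : Fin K → ℚ)
    (hconst : ∀ k : Fin K, ∀ t, σ k.castSucc ≤ t → t < σ k.succ → e t = ec k)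
    (S : Schedule n p D) (hord : RespectsOrder S)
    (hopt : ∀ S' : Schedule n p D, RespectsOrder S' → wcost w e S ≤ wcost w e S')
    (htie : ∀ S' : Schedule n p D, RespectsOrder S' → wcost w e S' = wcost w e S →
      tieVal S ≤ tieVal S')
    (a b : ℕ) (hsa : IsSplit K σ S a) (hsb : IsSplit K σ S b) (hab : a < b)
    (hcons : ∀ t, a < t → t < b → ¬ IsSplit K σ S t)
    (jx : Fin n) (hjx_start : a ≤ startTime S jx ∧ startTime S jx < b)
    (hjx_max : ∀ j : Fin n, a ≤ startTime S j → startTime S j < b →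
      dval w e S j ≤ dval w e S jx)
    (hjx_last : ∀ j : Fin n, a ≤ startTime S j → startTime S j < b →
      dval w e S j = dval w e S jx → j ≤ jx)
    (k : Fin K)
    (hlast : (∃ t, a ≤ t ∧ t < b ∧ σ k.castSucc ≤ t ∧ t < σ k.succ) ∧ b ≤ σ k.succ)
    (hpart1 : ∃ t, σ k.castSucc ≤ t ∧ t < σ k.succ ∧ S.assign t ≠ none)
    (hpart2 : ∃ t, σ k.castSucc ≤ t ∧ t < σ k.succ ∧ S.assign t = none) :
    ∀ t : ℕ, startTime S jx ≤ t → t < completion S jx →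
      e t ≤ emax e S jx → S.assign t ≠ none := by
  intro t0 ht1 ht2 ht3 hidle
  obtain ⟨L, hL, hCL⟩ := completion_ex hp S jx
  obtain ⟨t1, hj1, he1⟩ := emax_ex hp e S jx
  have hL' : S.assign L ≠ none := by simp [hL]
  have hj1' : S.assign t1 ≠ none := by simp [hj1]
  have hst := start_mem hp S jx
  have hA := ineqA hp w hw e S hord hopt
  have hB := ineqB hp w hw e S hord hopt htie
  have hnn : ∀ s : Finset (Fin n), 0 ≤ ∑ j ∈ s, w j := fun s => Finset.sum_nonneg fun j _ => hw j
  -- between two slots of jx only jx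
  have hspan : ∀ j, t1 < completion S j → completion S jx ≤ completion S j := by
    intro j hj
    obtain ⟨s, hs, hs2⟩ := completion_ex hp S j
    rcases lt_trichotomy j jx with h | h | h
    · have := hord j jx h s t1 hs hj1; omega
    · subst h; exact le_rfl
    · have := hord jx j h L s hL hs; omega
  have hLD := assign_lt S hL'
  have ht0L : t0 < L := by
    have : t0 ≠ L := by rintro rfl; exact hL' hidle
    omega
  have heL : e L < e t0 := by
    have := hB t0 L ht0L hidle hL'
    have := hnn {j | t0 < completion S j ∧ completion S j ≤ L + 1}
    linarith
  have hgap : ∀ f, startTime S jx ≤ f → f < completion S jx → S.assign f = none →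
      e t1 ≤ e f := by
    intro f h1 h2 h3
    have hne : f ≠ t1 := by rintro rfl; exact hj1' h3
    rcases Nat.lt_or_ge f t1 with h | h
    · have := hB f t1 h h3 hj1'
      have := hnn {j | f < completion S j ∧ completion S j ≤ t1 + 1}
      linarith
    · have := hA t1 f (by omega) (by omega) h3 hj1' (by
        intro j h4 h5
        have := hspan j h4
        omega)
      rw [Finset.sum_eq_zero] at this
      · linarith
      · intro j hj
        simp only [Finset.mem_filter, Finset.mem_univ, true_and] at hj
        have := hspan j hj.1
        omega
  have het0 : e t1 ≤ e t0 := hgap t0 ht1 ht2 hidle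
  have het0' : e t1 = e t0 := le_antisymm het0 (by rw [he1]; exact ht3)
  have ht1L := completion_le S hj1
  have ht1t0 : t1 < t0 := by
    have hne : t0 ≠ t1 := by rintro rfl; exact hj1' hidle
    by_contra hc
    have := hB t0 t1 (by omega) hidle hj1'
    have := hnn {j | t0 < completion S j ∧ completion S j ≤ t1 + 1}
    linarith
  have hcore : ∀ g u, completion S jx ≤ g → g < D → S.assign g = none → S.assign u ≠ none →
      g ≤ u + 1 → e u = e g →
      (∀ j, t1 < completion S j → completion S j < g → S.assign (completion S j) ≠ none) →
      False := by
    intro g u h1 h2 h3 h4 h5 h6 h7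
    have a1 := hA t1 g (by omega) h2 h3 hj1' h7
    have a2 := hB t0 u (by omega) hidle h4
    have a3 : ∑ j with t1 < completion S j ∧ completion S j ≤ g, w j ≤
        ∑ j with t0 < completion S j ∧ completion S j ≤ u + 1, w j := by
      apply Finset.sum_le_sum_of_subset_of_nonneg
      · intro j hj
        simp only [Finset.mem_filter, Finset.mem_univ, true_and] at hj ⊢
        have := hspan j hj.1
        omega
      · intro j _ _; exact hw j
    linarith
  have hbD : b ≤ D := by
    rw [← hσD]; exact hlast.2.trans (hmono.monotone (Fin.le_last _))
  have hkD : σ k.succ ≤ D := by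
    rw [← hσD]; exact hmono.monotone (Fin.le_last _)
  classical
  have H : ∀ j, t1 < completion S j → completion S j < b →
      S.assign (completion S j) ≠ none := by
    by_contra hc
    push Not at hc
    have hex : ∃ g, ∃ j, t1 < completion S j ∧ completion S j = g ∧ g < b ∧
        S.assign g = none := by
      obtain ⟨j, h1, h2, h3⟩ := hc
      exact ⟨_, j, h1, rfl, h2, h3⟩
    obtain ⟨j, h1, h2, h3, h4⟩ := Nat.find_spec hex
    have hmin := fun g (h : g < Nat.find hex) => Nat.find_min hex h
    generalize Nat.find hex = g at *
    have hjg := hspan j h1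
    obtain ⟨s, hs, hs2⟩ := completion_ex hp S j
    have hsplit : ∀ i : Fin n, startTime S i < g ↔ completion S i ≤ g := by
      intro i
      have hsi := start_mem hp S i
      have := completion_le S hsi
      constructor
      · intro hi
        obtain ⟨r, hr, hr2⟩ := completion_ex hp S i
        rcases lt_trichotomy i j with h | h | h
        · have := hord i j h r s hr hs; omega
        · subst h; omega
        · have := hord j i h s _ hs hsi
          have : startTime S i ≠ g := by omega
          omega
      · intro hi; omega
    have hnP : ¬ inP K σ D g := fun hP => hcons g (by omega) h3 ⟨hP, hsplit⟩
    obtain ⟨m, hm1, hm2⟩ := exists_interval K σ hσ0 g (by omega)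
    have hne : g ≠ σ m.castSucc := fun h => hnP (Or.inl ⟨m, Or.inl h⟩)
    refine hcore g s (by omega) (by omega) h4 (by simp [hs]) (by omega) ?_ ?_
    · rw [hconst m g hm1 hm2, hconst m s (by omega) (by omega)]
    · intro i hi1 hi2 hi3
      exact hmin _ hi2 ⟨i, hi1, rfl, by omega, hi3⟩
  have hCb : completion S jx ≤ b := (hsb.2 jx).1 hjx_start.2
  have hb1 : S.assign (b - 1) ≠ none := by
    have hP : L ≤ b - 1 := by omega
    have hg := Nat.findGreatest_spec (P := fun v => S.assign v ≠ none) hP hL'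
    have hle := Nat.findGreatest_le (P := fun v => S.assign v ≠ none) (b - 1)
    have hge := Nat.le_findGreatest (P := fun v => S.assign v ≠ none) hP hL'
    have hmx := fun i => @Nat.findGreatest_is_greatest i (fun v => S.assign v ≠ none) _ (b - 1)
    generalize Nat.findGreatest (fun v => S.assign v ≠ none) (b - 1) = v at *
    by_contra hc
    have hvb : v ≠ b - 1 := by rintro rfl; exact hg hc
    obtain ⟨i, hi⟩ := Option.ne_none_iff_exists'.mp hg
    have hib := (hsb.2 i).1 (by have := start_le S hi; omega)
    obtain ⟨s, hs, hs2⟩ := completion_ex hp S i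
    have hsv := completion_le S hi
    have : s = v := by
      by_contra hne
      exact hmx s (by omega) (by omega) (by simp [hs])
    exact hmx (v + 1) (by omega) (by omega) (by
      have h9 := H i (by omega) (by omega)
      rwa [hs2, this] at h9)
  obtain ⟨⟨q, hq1, hq2, hq3, hq4⟩, hbk⟩ := hlast
  have heb : e (b - 1) = ec k := hconst k _ (by omega) (by omega)
  obtain ⟨f, hf1, hf2, hf3⟩ := hpart2
  rcases Nat.lt_or_ge f b with hfb | hfb
  · rcases Nat.lt_or_ge f (completion S jx) with h | h
    · rcases Nat.lt_or_ge f (startTime S jx) with h' | h'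
      · have := hconst k t0 (by omega) (by omega)
        have := hconst k L (by omega) (by omega)
        linarith
      · have := hgap f h' h hf3
        have := hconst k f (by omega) (by omega)
        have := hconst k L (by omega) (by omega)
        linarith
    · refine hcore f (b-1) h (by omega) hf3 hb1 (by omega) ?_ ?_
      · rw [heb, hconst k f hf1 hf2]
      · intro j h1 h2; exact H j h1 (by omega)
  · have hex : ∃ f, b ≤ f ∧ S.assign f = none := ⟨f, hfb, hf3⟩
    have hfle := Nat.find_min' hex ⟨hfb, hf3⟩
    obtain ⟨h1, h2⟩ := Nat.find_spec hex
    have hmin := fun g (h : g < Nat.find hex) => Nat.find_min hex h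
    generalize Nat.find hex = g at *
    have hlow : ∀ s, b ≤ s → s < g → S.assign s ≠ none := fun s h3 h4 h5 => hmin s h4 ⟨h3, h5⟩
    refine hcore g (g-1) (by omega) (by omega) h2 ?_ (by omega) ?_ ?_
    · rcases Nat.lt_or_ge b g with h | h
      · exact hlow _ (by omega) (by omega)
      · rwa [show g = b by omega]
    · rw [hconst k g (by omega) (by omega), hconst k (g-1) (by omega) (by omega)]
    · intro j h3 h4
      rcases Nat.lt_or_ge (completion S j) b with h | h
      · exact H j h3 h
      · exact hlow _ h h4
end

section
/- There exists a schedule S* attaining the minimum of cost(S) = ∑_j w_j·C_j(S) + E(S) over all schedules such that the zero-weight jobs are scheduled completely after all other jobs: for all jobs j and k with w_j = 0 and w_k > 0, every time slot assigned to j by S* is strictly greater than every time slot assigned to k by S*. -/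
open Finset

variable {n D : ℕ} {p : Fin n → ℕ}

lemma zw_swap_lt {t t' D : ℕ} (ht : t < D) (ht' : t' < D) (s : ℕ) :
    Equiv.swap t t' s < D ↔ s < D := by
  rw [Equiv.swap_apply_def]; split_ifs <;> omega

def zwSwap {n D : ℕ} {p : Fin n → ℕ} (S : Schedule n p D) (t t' : ℕ) (ht : t < D) (ht' : t' < D) :
    Schedule n p D where
  assign s := S.assign (Equiv.swap t t' s)
  card_slots j := by
    rw [← S.card_slots j]
    apply Finset.card_bij (fun s _ => Equiv.swap t t' s)
    · intro s hs
      simp only [Finset.mem_filter, Finset.mem_range] at hs ⊢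
      exact ⟨(zw_swap_lt ht ht' s).2 hs.1, hs.2⟩
    · intro a _ b _ h
      exact (Equiv.swap t t').injective h
    · intro s hs
      simp only [Finset.mem_filter, Finset.mem_range] at hs
      refine ⟨Equiv.swap t t' s, ?_, by simp⟩
      simp only [Finset.mem_filter, Finset.mem_range, Equiv.swap_apply_self]
      exact ⟨(zw_swap_lt ht ht' s).2 hs.1, hs.2⟩
  beyond s hs := S.beyond _ (by
    have := zw_swap_lt ht ht' s
    omega)

lemma zw_finite (n D : ℕ) (p : Fin n → ℕ) : Finite (Schedule n p D) := by
  apply Finite.of_injective (fun (S : Schedule n p D) (i : Fin D) => S.assign i)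
  intro S T h
  have h2 : S.assign = T.assign := by
    funext s
    by_cases hs : s < D
    · exact congrFun h ⟨s, hs⟩
    · rw [S.beyond s (by omega), T.beyond s (by omega)]
  cases S; cases T; simp at h2; subst h2; rfl

open Classical in
lemma zw_nonempty (n D : ℕ) (p : Fin n → ℕ) (hD : ∑ j, p j ≤ D) : Nonempty (Schedule n p D) := by
  have hc : Fintype.card (Σ j, Fin (p j)) ≤ Fintype.card (Fin D) := by simpa using hD
  obtain ⟨f⟩ := Function.Embedding.nonempty_of_card_le hc
  let A : ℕ → Option (Fin n) := fun s =>
    if h : ∃ x, (f x : ℕ) = s then some h.choose.1 else none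
  have hA : ∀ x, A (f x) = some x.1 := by
    intro x
    have h : ∃ y, (f y : ℕ) = f x := ⟨x, rfl⟩
    have h3 : h.choose = x := f.injective (Fin.ext h.choose_spec)
    simp only [A, dif_pos h]
    rw [h3]
  have hB : ∀ s j, A s = some j → ∃ i, (f ⟨j, i⟩ : ℕ) = s := by
    intro s j h
    by_cases hx : ∃ x, (f x : ℕ) = s
    · obtain ⟨⟨j', i⟩, rfl⟩ := hx
      rw [hA] at h
      simp at h; subst h
      exact ⟨i, rfl⟩
    · simp only [A] at h
      rw [dif_neg hx] at h
      simp at h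
  refine ⟨⟨A, ?_, ?_⟩⟩
  · intro j
    have h : (Finset.range D).filter (fun t => A t = some j)
        = (Finset.univ : Finset (Fin (p j))).image (fun i => (f ⟨j, i⟩ : ℕ)) := by
      ext s
      simp only [Finset.mem_filter, Finset.mem_range, Finset.mem_image, Finset.mem_univ, true_and]
      constructor
      · intro h
        exact hB s j h.2
      · rintro ⟨i, rfl⟩
        exact ⟨(f ⟨j, i⟩).2, hA _⟩
    have key : ((Finset.univ : Finset (Fin (p j))).image (fun i => (f ⟨j, i⟩ : ℕ))).card = p j := by
      rw [Finset.card_image_of_injective]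
      · simp
      · intro a b hab
        have := f.injective (Fin.ext hab)
        simpa using this
    rw [← key, ← h]
  · intro s hs
    apply dif_neg
    rintro ⟨x, rfl⟩
    have := (f x).2
    omega

open Classical in
noncomputable def zwPhi {n D : ℕ} {p : Fin n → ℕ} (w : Fin n → ℚ) (S : Schedule n p D) : ℕ :=
  ∑ s ∈ Finset.range D, if ∃ k, S.assign s = some k ∧ 0 < w k then s else 0

/-- There is a minimum-cost schedule (weighted completion times plus utilization cost)
scheduling all zero-weight jobs completely after all positive-weight jobs. -/
theorem zero_weight_jobs_last (n : ℕ) (p : Fin n → ℕ) (hp : ∀ j, 1 ≤ p j)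
    (w : Fin n → ℚ) (hw : ∀ j, 0 ≤ w j)
    (e : ℕ → ℚ) (he : ∀ t, 0 ≤ e t) (D : ℕ) (hD : ∑ j, p j ≤ D) :
    ∃ S' : Schedule n p D,
      (∀ S : Schedule n p D,
        (∑ j : Fin n, w j * (completion S' j : ℚ)) + ucost e S'
          ≤ (∑ j : Fin n, w j * (completion S j : ℚ)) + ucost e S) ∧
      (∀ j k : Fin n, w j = 0 → 0 < w k → ∀ t t',
        S'.assign t = some j → S'.assign t' = some k → t' < t) := by
  have := zw_finite n D p
  have := zw_nonempty n D p hD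
  obtain ⟨S, hS⟩ := Finite.exists_min (fun S : Schedule n p D =>
    toLex ((∑ j : Fin n, w j * (completion S j : ℚ)) + ucost e S, zwPhi w S))
  simp only [Prod.Lex.toLex_le_toLex] at hS
  refine ⟨S, fun T => ?_, ?_⟩
  · rcases hS T with h | h
    · exact h.le
    · exact h.1.le
  intro j k hj hk t t' h1 h2
  by_contra hlt
  have hne : t ≠ t' := by
    rintro rfl
    rw [h1] at h2
    simp at h2; subst h2
    simp [hj] at hk
  have htt : t < t' := by omega
  have ht' : t' < D := by
    by_contra h
    rw [S.beyond t' (by omega)] at h2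
    simp at h2
  have ht : t < D := by omega
  let T := zwSwap S t t' ht ht'
  have hTa : ∀ s, T.assign s = S.assign (Equiv.swap t t' s) := fun _ => rfl
  have hu : ucost e T = ucost e S := by
    unfold ucost
    congr 1
    apply Finset.filter_congr
    intro s _
    rw [hTa, Equiv.swap_apply_def]
    split_ifs with ha hb
    · subst ha; simp [h1, h2]
    · subst hb; simp [h1, h2]
    · rfl
  have hc : ∀ i, w i * (completion T i : ℚ) ≤ w i * (completion S i : ℚ) := by
    intro i
    rcases (hw i).eq_or_lt with hi | hi
    · simp [← hi]
    apply mul_le_mul_of_nonneg_left _ hi.le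
    have : completion T i ≤ completion S i := by
      unfold completion
      apply Nat.add_le_add_right
      apply Finset.sup_le
      intro s hs
      simp only [jobSlots, Finset.mem_filter, Finset.mem_range, hTa] at hs
      have hmem : Equiv.swap t t' s ∈ jobSlots S i := by
        simp only [jobSlots, Finset.mem_filter, Finset.mem_range]
        exact ⟨(zw_swap_lt ht ht' s).2 hs.1, hs.2⟩
      have hle := Finset.le_sup (f := id) hmem
      refine le_trans ?_ hle
      have h3 := hs.2
      simp only [id]
      rw [Equiv.swap_apply_def] at h3 ⊢
      split_ifs at h3 ⊢ with ha hb
      · omega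
      · rw [h1] at h3
        simp at h3; subst h3
        simp [hj] at hi
      · exact le_rfl
    exact_mod_cast this
  have hphi : zwPhi w T < zwPhi w S := by
    classical
    have e1 : zwPhi w T = ∑ s ∈ Finset.range D,
        if ∃ k, S.assign s = some k ∧ 0 < w k then Equiv.swap t t' s else 0 := by
      unfold zwPhi
      apply Finset.sum_bij (fun s _ => Equiv.swap t t' s)
      · intro s hs
        simp only [Finset.mem_range] at hs ⊢
        exact (zw_swap_lt ht ht' s).2 hs
      · intro a _ b _ h
        exact (Equiv.swap t t').injective h
      · intro s hs
        simp only [Finset.mem_range] at hs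
        refine ⟨Equiv.swap t t' s, ?_, by simp⟩
        simp only [Finset.mem_range]
        exact (zw_swap_lt ht ht' s).2 hs
      · intro s _
        simp only [hTa, Equiv.swap_apply_self]
    rw [e1]
    unfold zwPhi
    apply Finset.sum_lt_sum
    · intro s _
      split_ifs with h
      · obtain ⟨i, hi, hi'⟩ := h
        rw [Equiv.swap_apply_def]
        split_ifs with ha hb
        · subst ha
          rw [h1] at hi
          simp at hi; subst hi
          simp [hj] at hi'
        · omega
        · exact le_rfl
      · exact le_rfl
    · refine ⟨t', by simpa using ht', ?_⟩
      have h : ∃ i, S.assign t' = some i ∧ 0 < w i := ⟨k, h2, hk⟩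
      rw [if_pos h, if_pos h, Equiv.swap_apply_right]
      exact htt
  have hsum := Finset.sum_le_sum (fun i (_ : i ∈ (Finset.univ : Finset (Fin n))) => hc i)
  rcases hS T with h | h
  · rw [hu] at h; linarith
  · have := h.2; omega
end

section
/- Consider the single-machine makespan problem with utilization cost: the total cost of a schedule S is Cmax(S) + E(S), where Cmax(S) = max_j C_j(S). Let P = ∑_j p_j. Then there exists a schedule S* of minimum total cost whose set U of utilized slots is a minimum-tariff P-element subset of [0, Cmax(S*)): |U| = P, max U = Cmax(S*) − 1, and for every P-element subset U' of {0, 1, …, Cmax(S*) − 1} one has ∑_{t ∈ U} e(t) ≤ ∑_{t ∈ U'} e(t). -/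
open Finset

variable {n D : ℕ} {p : Fin n → ℕ}

theorem aux_card (S : Schedule n p D) :
    ((Finset.range D).filter (fun t => S.assign t ≠ none)).card = ∑ j, p j := by
  have h : (Finset.range D).filter (fun t => S.assign t ≠ none)
      = Finset.univ.biUnion (fun j => jobSlots S j) := by
    ext t
    simp only [jobSlots, mem_filter, mem_biUnion, mem_univ, true_and, Option.ne_none_iff_exists']
    tauto
  rw [h, Finset.card_biUnion]
  · exact Finset.sum_congr rfl (fun j _ => S.card_slots j)
  · intro i _ j _ hij
    rw [Function.onFun, Finset.disjoint_left]
    intro t h1 h2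
    simp only [jobSlots, mem_filter] at h1 h2
    exact hij (Option.some.inj (h1.2.symm.trans h2.2))

theorem aux_sup (hn : 0 < n) (S : Schedule n p D) :
    (Finset.univ.sup fun j => completion S j) =
      ((Finset.range D).filter (fun t => S.assign t ≠ none)).sup id + 1 := by
  apply le_antisymm
  · apply Finset.sup_le
    intro j _
    apply Nat.succ_le_succ
    apply Finset.sup_mono
    intro t ht
    simp only [jobSlots, mem_filter] at ht ⊢
    exact ⟨ht.1, by simp [ht.2]⟩
  · have h1 : ∀ j, completion S j ≤ Finset.univ.sup fun j => completion S j :=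
      fun j => Finset.le_sup (f := fun j => completion S j) (mem_univ j)
    have h0 := h1 ⟨0, hn⟩
    have h2 : ((Finset.range D).filter (fun t => S.assign t ≠ none)).sup id
        ≤ (Finset.univ.sup fun j => completion S j) - 1 := by
      apply Finset.sup_le
      intro t ht
      simp only [mem_filter, Option.ne_none_iff_exists'] at ht
      obtain ⟨hD, j, hj⟩ := ht
      have h3 : t ≤ (jobSlots S j).sup id :=
        Finset.le_sup (f := id) (by simp only [jobSlots, mem_filter]; exact ⟨hD, hj⟩)
      have h4 := h1 j
      unfold completion at h4
      simp only [id]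
      unfold completion
      omega
    have : 1 ≤ completion S ⟨0, hn⟩ := by unfold completion; omega
    omega

theorem aux_exists (U : Finset ℕ) (hU : U ⊆ Finset.range D) (hc : U.card = ∑ j, p j) :
    ∃ S : Schedule n p D, (Finset.range D).filter (fun t => S.assign t ≠ none) = U := by
  classical
  have f : U ≃ (Σ j, Fin (p j)) := Fintype.equivOfCardEq (by simp [hc])
  refine ⟨⟨fun t => if h : t ∈ U then some (f ⟨t, h⟩).1 else none, ?_, ?_⟩, ?_⟩
  · intro j
    have : (Finset.range D).filter
        (fun t => (if h : t ∈ U then some (f ⟨t, h⟩).1 else none) = some j)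
        = (Finset.univ : Finset (Fin (p j))).image (fun k => (f.symm ⟨j, k⟩ : ℕ)) := by
      ext t
      simp only [mem_filter, mem_image, mem_univ, true_and]
      constructor
      · rintro ⟨_, h⟩
        split_ifs at h with ht
        have h := Option.some.inj h
        subst h
        exact ⟨(f ⟨t, ht⟩).2, by simp⟩
      · rintro ⟨k, rfl⟩
        have := (f.symm ⟨j, k⟩).2
        exact ⟨hU this, by simp⟩
    rw [this, Finset.card_image_of_injective]
    · simp
    · intro a b hab
      have := f.symm.injective (Subtype.ext hab)
      simpa using this
  · intro t ht
    have : t ∉ U := fun h => by have := Finset.mem_range.1 (hU h); omega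
    simp [this]
  · ext t
    simp only [mem_filter]
    constructor
    · rintro ⟨_, h⟩
      by_contra h'
      simp [h'] at h
    · intro h
      exact ⟨hU h, by simp [h]⟩

/-- For makespan plus utilization cost on a single machine, some optimal schedule
utilizes exactly a minimum-tariff `P`-element subset of `[0, Cmax)` whose maximum
element is `Cmax − 1`, where `P = ∑_j p_j`. -/
theorem makespan_optimal_cheapest_slots (n : ℕ) (hn : 0 < n)
    (p : Fin n → ℕ) (hp : ∀ j, 1 ≤ p j)
    (e : ℕ → ℚ) (he : ∀ t, 0 ≤ e t) (D : ℕ) (hD : ∑ j, p j ≤ D) :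
    ∃ S' : Schedule n p D,
      (∀ S : Schedule n p D,
        ((Finset.univ.sup fun j => completion S' j : ℕ) : ℚ) + ucost e S'
          ≤ ((Finset.univ.sup fun j => completion S j : ℕ) : ℚ) + ucost e S) ∧
      (((Finset.range D).filter (fun t => S'.assign t ≠ none)).card = ∑ j, p j) ∧
      (((Finset.range D).filter (fun t => S'.assign t ≠ none)).max =
        (((Finset.univ.sup fun j => completion S' j) - 1 : ℕ) : WithBot ℕ)) ∧
      (∀ U' : Finset ℕ,
        U' ⊆ Finset.range (Finset.univ.sup fun j => completion S' j) →
        U'.card = ∑ j, p j →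
        ∑ t ∈ (Finset.range D).filter (fun t => S'.assign t ≠ none), e t
          ≤ ∑ t ∈ U', e t) := by
  obtain ⟨U, hU, hmin⟩ := Finset.exists_min_image
    (Finset.powersetCard (∑ j, p j) (Finset.range D))
    (fun U => ((U.sup id + 1 : ℕ) : ℚ) + ∑ t ∈ U, e t)
    (Finset.powersetCard_nonempty.2 (by simpa using hD))
  rw [Finset.mem_powersetCard] at hU
  obtain ⟨S', hS'⟩ := aux_exists (n := n) (p := p) U hU.1 hU.2
  have hne : U.Nonempty := by
    rw [← Finset.card_pos, hU.2]
    exact lt_of_lt_of_le (hp ⟨0, hn⟩)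
      (Finset.single_le_sum (f := p) (fun _ _ => Nat.zero_le _) (mem_univ _))
  have hlt : U.sup id + 1 ≤ D := by
    obtain ⟨x, hx, hxe⟩ := Finset.exists_mem_eq_sup U hne id
    have := Finset.mem_range.1 (hU.1 hx)
    rw [hxe]
    exact this
  refine ⟨S', ?_, aux_card S', ?_, ?_⟩
  · intro S
    rw [aux_sup hn, aux_sup hn]
    unfold ucost
    rw [hS']
    exact hmin _ (Finset.mem_powersetCard.2 ⟨Finset.filter_subset _ _, aux_card S⟩)
  · rw [aux_sup hn, hS', Nat.add_sub_cancel, ← Finset.coe_max' hne, Finset.max'_eq_sup',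
      Finset.sup'_eq_sup]
    rfl
  · intro U' hsub hcard
    rw [aux_sup hn, hS'] at hsub
    rw [hS']
    have h := hmin U' (Finset.mem_powersetCard.2
      ⟨hsub.trans (Finset.range_subset_range.2 hlt), hcard⟩)
    have h2 : U'.sup id ≤ U.sup id := by
      apply Finset.sup_le
      intro t ht
      have := Finset.mem_range.1 (hsub ht)
      simp only [id] at this ⊢
      omega
    have h3 : ((U'.sup id + 1 : ℕ) : ℚ) ≤ ((U.sup id + 1 : ℕ) : ℚ) := by exact_mod_cast Nat.succ_le_succ h2
    linarith
end
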